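/- Let 0 < α < 1/2 and ε > 0 with 2α + ε < 1, let M = ⌈8/(1−2α)⌉ + 1, and let p = n^{α−1}. Then with high probability, a random complex Y drawn from Y(n,p) contains no inclusion-minimal Z/2 2-cycle whose number of faces f satisfies 2M − 2 ≤ f ≤ n^{2−2α−ε}. -/

import Mathlib

open scoped ENNReal

/-- The 3-element subsets of the vertex set `Fin n` (the possible faces). -/
abbrev Tri (n : ℕ) := {t : Finset (Fin n) // t.card = 3}

/-- The probability of the event `E` under the Linial–Meshulam measure `Y(n,p)`:
a complex is a configuration `ω : Tri n → Bool` recording which faces are present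
(the vertex set is `Fin n` and all edges are present), each face independently
present with probability `p`; the probability of `E` is the sum over configurations
in `E` of `∏ (p if the face is present, else 1-p)`. -/
noncomputable def lmProb (n : ℕ) (p : ℝ≥0∞) (E : Set (Tri n → Bool)) : ℝ≥0∞ :=
  ∑' ω : E, ∏ t : Tri n, (if (ω : Tri n → Bool) t then p else 1 - p)

/-- `y` is a filling of `τ` in the complex `ω`: a set of faces of `ω` such that a
2-element subset of the vertex set is contained in an odd number of members of `y`
exactly when it is a subset of `τ`. -/
def IsFilling (n : ℕ) (ω : Tri n → Bool) (τ : Finset (Fin n))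
    (y : Finset (Finset (Fin n))) : Prop :=
  (∀ t ∈ y, ∃ h : t.card = 3, ω ⟨t, h⟩ = true) ∧
  ∀ e : Finset (Fin n), e.card = 2 →
    (Odd ((y.filter (fun t => e ⊆ t)).card) ↔ e ⊆ τ)

/-- `fill n ω τ` is the filling area of `τ` in `ω`: the minimum cardinality of a
filling of `τ`, as an extended natural number (`⊤` if no filling exists). -/
noncomputable def fill (n : ℕ) (ω : Tri n → Bool) (τ : Finset (Fin n)) : ℕ∞ :=
  ⨅ y : {y : Finset (Finset (Fin n)) // IsFilling n ω τ y},
    ((y : Finset (Finset (Fin n))).card : ℕ∞)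

/-- A `Z/2` 2-cycle: a finite set `Z` of 3-element subsets of the vertex type `V`
such that every 2-element subset of `V` is contained in an even number of members of `Z`. -/
def IsTwoCycle {V : Type} [DecidableEq V] (Z : Finset (Finset V)) : Prop :=
  (∀ t ∈ Z, t.card = 3) ∧
  ∀ e : Finset V, e.card = 2 → Even ((Z.filter (fun t => e ⊆ t)).card)

/-- An inclusion-minimal (nontrivial) `Z/2` 2-cycle: a nonempty 2-cycle no nonempty
proper subset of which is a 2-cycle. -/
def IsMinCycle {V : Type} [DecidableEq V] (Z : Finset (Finset V)) : Prop :=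
  IsTwoCycle Z ∧ Z.Nonempty ∧ ∀ Z' ⊂ Z, Z'.Nonempty → ¬ IsTwoCycle Z'

section Walks
variable {V : Type} [Fintype V] [DecidableEq V]

/-- Closed-up walks with prescribed parity. -/
def lmWalks (ρ : V) : ℕ → V → Finset (Sym2 V) → Finset (List V)
  | 0, w, B => if w = ρ ∧ B = ∅ then {[]} else ∅
  | r + 1, w, B => (Finset.univ.filter (fun x => x ≠ w)).biUnion
      (fun x => (lmWalks ρ r x (symmDiff B {s(w, x)})).image (List.cons x))

def lmDeg (B : Finset (Sym2 V)) (u : V) : ℕ := (Finset.univ.filter (fun y => s(u, y) ∈ B)).card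

lemma lmDeg_insert (B : Finset (Sym2 V)) (w x u : V) (h : w ≠ x) (hB : s(w, x) ∉ B) :
    lmDeg (insert s(w, x) B) u = lmDeg B u + ((if u = w then 1 else 0) + (if u = x then 1 else 0)) := by
  unfold lmDeg
  have h1 : (Finset.univ.filter (fun y => s(u, y) ∈ insert s(w, x) B))
      = (Finset.univ.filter (fun y => s(u, y) ∈ B)) ∪ (Finset.univ.filter (fun y => s(u, y) = s(w,x))) := by
    ext y; simp [or_comm]
  rw [h1, Finset.card_union_of_disjoint]
  · congr 1
    by_cases h2 : u = w
    · subst h2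
      rw [if_pos rfl, if_neg h, Finset.card_eq_one]
      refine ⟨x, ?_⟩
      ext y; simp
      rintro rfl rfl; rfl
    · by_cases h3 : u = x
      · subst h3
        rw [if_neg h2, if_pos rfl, zero_add, Finset.card_eq_one]
        refine ⟨w, ?_⟩
        ext y; simp [h2]
      · rw [if_neg h2, if_neg h3, add_zero, Finset.card_eq_zero]
        ext y; simp [h2, h3]
  · rw [Finset.disjoint_left]
    intro y hy hy2
    simp only [Finset.mem_filter, Finset.mem_univ, true_and] at hy hy2
    rw [hy2] at hy
    exact hB hy

lemma lmWalks_card_le (ρ : V) (s : ℝ) (m : ℕ) (hs : 0 < s)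
    (hsm : (Fintype.card V : ℝ) + m ≤ s ^ 2) (r : ℕ) :
    ∀ (w : V) (B : Finset (Sym2 V)) (h : V → ℕ),
      (∀ u, lmDeg B u + (if u = w then 1 else 0) = 2 * h u + (if u = ρ then 1 else 0)) →
      (∑ u, h u) + r ≤ m →
      ((lmWalks ρ r w B).card : ℝ) ≤ (∏ u, ((h u).factorial : ℝ)) * (3 * s) ^ r / s ^ (∑ u, h u) := by
  induction r with
  | zero =>
    intro w B h hd hm
    unfold lmWalks
    split_ifs with hc
    · obtain ⟨rfl, rfl⟩ := hc
      have h0 : ∀ u, h u = 0 := by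
        intro u
        have := hd u
        simp [lmDeg] at this
        omega
      simp [h0]
    · simp
      positivity
  | succ r ih =>
    intro w B h hd hm
    set P : ℝ := ∏ u, ((h u).factorial : ℝ) with hP
    set H : ℕ := ∑ u, h u with hH
    have hP0 : 0 < P := Finset.prod_pos (fun u _ => by positivity)
    have step : ((lmWalks ρ (r+1) w B).card : ℝ) ≤
        ∑ x ∈ Finset.univ.filter (fun x => x ≠ w),
          ((lmWalks ρ r x (symmDiff B {s(w, x)})).card : ℝ) := by
      rw [lmWalks]
      refine le_trans (Nat.cast_le.mpr Finset.card_biUnion_le) ?_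
      push_cast
      refine Finset.sum_le_sum (fun x _ => ?_)
      exact_mod_cast Finset.card_image_le
    refine step.trans ?_
    rw [← Finset.sum_filter_add_sum_filter_not _ (fun x => s(w, x) ∈ B)]
    have hclose : ∑ x ∈ (Finset.univ.filter (fun x => x ≠ w)).filter (fun x => s(w, x) ∈ B),
          ((lmWalks ρ r x (symmDiff B {s(w, x)})).card : ℝ) ≤ 2 * s * (P * (3 * s) ^ r / s ^ H) := by
      by_cases hw : h w = 0
      · rw [Finset.sum_eq_zero]
        · positivity
        · intro x hx
          simp only [Finset.mem_filter, Finset.mem_univ, true_and] at hx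
          exfalso
          have h1 := hd w
          have h2 : 0 < lmDeg B w := Finset.card_pos.mpr ⟨x, by simp [hx.2]⟩
          rw [hw] at h1
          simp at h1
          split_ifs at h1 <;> omega
      obtain ⟨k, hk⟩ := Nat.exists_eq_succ_of_ne_zero hw
      set h' : V → ℕ := Function.update h w k with hh'
      have hsum : ∑ u, h' u + 1 = H := by
        rw [hH, ← Finset.add_sum_erase _ _ (Finset.mem_univ w), ← Finset.add_sum_erase _ h (Finset.mem_univ w)]
        have : ∑ u ∈ Finset.univ.erase w, h' u = ∑ u ∈ Finset.univ.erase w, h u :=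
          Finset.sum_congr rfl (fun u hu => by simp [hh', Finset.ne_of_mem_erase hu])
        rw [this]; simp [hh', hk]; omega
      have hprod : (∏ u, ((h' u).factorial : ℝ)) * (h w : ℝ) = P := by
        rw [hP, ← Finset.mul_prod_erase _ _ (Finset.mem_univ w), ← Finset.mul_prod_erase _ (fun u => ((h u).factorial : ℝ)) (Finset.mem_univ w)]
        have : ∏ u ∈ Finset.univ.erase w, ((h' u).factorial : ℝ) = ∏ u ∈ Finset.univ.erase w, ((h u).factorial : ℝ) :=
          Finset.prod_congr rfl (fun u hu => by simp [hh', Finset.ne_of_mem_erase hu])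
        rw [this]; simp [hh', hk, Nat.factorial_succ]; ring
      have hcard : ((Finset.univ.filter (fun x => x ≠ w)).filter (fun x => s(w, x) ∈ B)).card ≤ 2 * h w := by
        have h1 := hd w
        have h2 : ((Finset.univ.filter (fun x => x ≠ w)).filter (fun x => s(w, x) ∈ B)).card ≤ lmDeg B w := by
          apply Finset.card_le_card
          intro x; simp
        simp at h1
        split_ifs at h1 <;> omega
      have hterm : ∀ x ∈ (Finset.univ.filter (fun x => x ≠ w)).filter (fun x => s(w, x) ∈ B),
          ((lmWalks ρ r x (symmDiff B {s(w, x)})).card : ℝ) ≤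
            (∏ u, ((h' u).factorial : ℝ)) * (3 * s) ^ r / s ^ (∑ u, h' u) := by
        intro x hx
        simp only [Finset.mem_filter, Finset.mem_univ, true_and] at hx
        apply ih
        · intro u
          have h1 := lmDeg_insert (B.erase s(w,x)) w x u (Ne.symm hx.1) (by simp)
          rw [Finset.insert_erase hx.2] at h1
          have h2 : symmDiff B {s(w, x)} = B.erase s(w,x) := by
            ext e; simp [Finset.mem_symmDiff]
            constructor
            · rintro (⟨a, b⟩ | ⟨rfl, b⟩)
              · exact ⟨b, a⟩
              · exact absurd hx.2 b
            · rintro ⟨a, b⟩; exact Or.inl ⟨b, a⟩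
          rw [h2]
          have h3 := hd u
          by_cases huw : u = w
          · subst huw
            simp [hh', hx.1.symm] at h1 h3 ⊢
            omega
          · simp [hh', huw] at h1 h3 ⊢
            omega
        · omega
      refine (Finset.sum_le_card_nsmul _ _ _ hterm).trans ?_
      rw [nsmul_eq_mul]
      have hc' : (((Finset.univ.filter (fun x => x ≠ w)).filter (fun x => s(w, x) ∈ B)).card : ℝ) ≤ 2 * h w := by
        exact_mod_cast hcard
      refine (mul_le_mul_of_nonneg_right hc' (by positivity)).trans (le_of_eq ?_)
      rw [← hprod, ← hsum, pow_succ]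
      field_simp
    have hopen : ∑ x ∈ (Finset.univ.filter (fun x => x ≠ w)).filter (fun x => ¬ s(w, x) ∈ B),
          ((lmWalks ρ r x (symmDiff B {s(w, x)})).card : ℝ) ≤ s * (P * (3 * s) ^ r / s ^ H) := by
      have hterm : ∀ x ∈ (Finset.univ.filter (fun x => x ≠ w)).filter (fun x => ¬ s(w, x) ∈ B),
          ((lmWalks ρ r x (symmDiff B {s(w, x)})).card : ℝ) ≤
            ((h x : ℝ) + 1) * (P * (3 * s) ^ r / s ^ (H + 1)) := by
        intro x hx
        simp only [Finset.mem_filter, Finset.mem_univ, true_and] at hx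
        set h' : V → ℕ := Function.update h x (h x + 1) with hh'
        have hsum : ∑ u, h' u = H + 1 := by
          rw [hH, ← Finset.add_sum_erase _ _ (Finset.mem_univ x), ← Finset.add_sum_erase _ h (Finset.mem_univ x)]
          have : ∑ u ∈ Finset.univ.erase x, h' u = ∑ u ∈ Finset.univ.erase x, h u :=
            Finset.sum_congr rfl (fun u hu => by simp [hh', Finset.ne_of_mem_erase hu])
          rw [this]; simp [hh']; omega
        have hprod : (∏ u, ((h' u).factorial : ℝ)) = P * ((h x : ℝ) + 1) := by
          rw [hP, ← Finset.mul_prod_erase _ _ (Finset.mem_univ x), ← Finset.mul_prod_erase _ (fun u => ((h u).factorial : ℝ)) (Finset.mem_univ x)]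
          have : ∏ u ∈ Finset.univ.erase x, ((h' u).factorial : ℝ) = ∏ u ∈ Finset.univ.erase x, ((h u).factorial : ℝ) :=
            Finset.prod_congr rfl (fun u hu => by simp [hh', Finset.ne_of_mem_erase hu])
          rw [this]; simp [hh', Nat.factorial_succ]; ring
        have := ih x (symmDiff B {s(w, x)}) h' (by
          intro u
          have h1 := lmDeg_insert B w x u (Ne.symm hx.1) hx.2
          have h2 : symmDiff B {s(w, x)} = insert s(w,x) B := by
            ext e; simp [Finset.mem_symmDiff]
            constructor
            · rintro (⟨a, b⟩ | ⟨rfl, b⟩)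
              · exact Or.inr a
              · exact Or.inl rfl
            · rintro (rfl | b)
              · exact Or.inr ⟨rfl, hx.2⟩
              · refine Or.inl ⟨b, ?_⟩
                rintro rfl
                exact hx.2 b
          rw [h2]
          have h3 := hd u
          by_cases hux : u = x
          · subst hux
            simp [hh', hx.1] at h1 h3 ⊢
            omega
          · simp [hh', hux] at h1 h3 ⊢
            omega) (by omega)
        refine this.trans (le_of_eq ?_)
        rw [hprod, hsum]; ring
      refine (Finset.sum_le_sum hterm).trans ?_
      rw [← Finset.sum_mul]
      have hle : ∑ x ∈ (Finset.univ.filter (fun x => x ≠ w)).filter (fun x => ¬ s(w, x) ∈ B), ((h x : ℝ) + 1)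
          ≤ s ^ 2 := by
        refine le_trans (Finset.sum_le_sum_of_subset_of_nonneg (Finset.subset_univ _) (fun _ _ _ => by positivity)) ?_
        refine le_trans ?_ hsm
        rw [Finset.sum_add_distrib]
        simp
        have : (∑ x, (h x : ℝ)) ≤ m := by
          have : (∑ x, h x) ≤ m := by omega
          exact_mod_cast this
        linarith
      refine (mul_le_mul_of_nonneg_right hle (by positivity)).trans (le_of_eq ?_)
      rw [pow_succ s H]; field_simp
    refine (add_le_add hclose hopen).trans (le_of_eq ?_)
    rw [pow_succ]; ring

lemma lmWalks_closed_card_le (ρ : V) (r : ℕ) :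
    ((lmWalks ρ r ρ ∅).card : ℝ) ≤ (3 * Real.sqrt (Fintype.card V + r)) ^ r := by
  have hpos : 0 < Fintype.card V := Fintype.card_pos_iff.mpr ⟨ρ⟩
  have := lmWalks_card_le ρ (Real.sqrt (Fintype.card V + r)) r (by positivity)
    (by rw [Real.sq_sqrt (by positivity)]) r ρ ∅ (fun _ => 0) (by simp [lmDeg]) (by simp)
  simpa using this

end Walks

section Trees
variable {V : Type} [DecidableEq V]

def lmE : V → BinaryTree V → V → Finset (Sym2 V)
  | a, .nil, b => {s(a, b)}
  | a, .node x l r, b => symmDiff (lmE a l x) (lmE x r b)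

def lmLF : V → BinaryTree V → V → Prop
  | a, .nil, b => a ≠ b
  | a, .node x l r, b => lmLF a l x ∧ lmLF x r b

def lmFaces : V → BinaryTree V → V → Finset (Finset V)
  | _, .nil, _ => ∅
  | a, .node x l r, b => insert {a, x, b} (lmFaces a l x ∪ lmFaces x r b)

def lmInorder : BinaryTree V → List V
  | .nil => []
  | .node x l r => lmInorder l ++ x :: lmInorder r

lemma lmE_not_diag (T : BinaryTree V) : ∀ a b, lmLF a T b → ∀ u, s(u, u) ∉ lmE a T b := by
  induction T with
  | nil =>
    intro a b h u hu
    simp only [lmE, Finset.mem_singleton, Sym2.eq_iff] at hu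
    simp only [lmLF] at h
    rcases hu with ⟨h1, h2⟩ | ⟨h1, h2⟩
    · exact h (h1.symm.trans h2)
    · exact h (h2.symm.trans h1)
  | node x l r ihl ihr =>
    intro a b h u hu
    simp only [lmE, Finset.mem_symmDiff] at hu
    rcases hu with ⟨h1, _⟩ | ⟨h1, _⟩
    · exact ihl _ _ h.1 _ h1
    · exact ihr _ _ h.2 _ h1

lemma lmInorder_inj (T : BinaryTree V) : ∀ (T' : BinaryTree V) (K K' : List V),
    T.map (fun _ => ()) = T'.map (fun _ => ()) →
    lmInorder T ++ K = lmInorder T' ++ K' → T = T' ∧ K = K' := by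
  induction T with
  | nil =>
    intro T' K K' h1 h2
    cases T' with
    | nil => exact ⟨rfl, by simpa [lmInorder] using h2⟩
    | node x l r => simp [BinaryTree.map] at h1
  | node x l r ihl ihr =>
    intro T' K K' h1 h2
    cases T' with
    | nil => simp [BinaryTree.map] at h1
    | node x' l' r' =>
      simp only [BinaryTree.map, BinaryTree.node.injEq, true_and] at h1
      simp only [lmInorder, List.append_assoc, List.cons_append] at h2
      obtain ⟨rfl, h3⟩ := ihl _ _ _ h1.1 h2
      simp only [List.cons.injEq] at h3
      obtain ⟨rfl, h4⟩ := ihr _ _ _ h1.2 h3.2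
      exact ⟨by rw [h3.1], h4⟩

lemma lmWalks_mem [Fintype V] (ρ : V) (T : BinaryTree V) : ∀ (a b : V) (K : List V) (r : ℕ) (B : Finset (Sym2 V)),
    lmLF a T b → K ∈ lmWalks ρ r b (symmDiff B (lmE a T b)) →
    lmInorder T ++ b :: K ∈ lmWalks ρ (r + T.numNodes + 1) a B := by
  induction T with
  | nil =>
    intro a b K r B h hK
    simp only [lmLF] at h
    simp only [lmE] at hK
    simp only [lmInorder, BinaryTree.numNodes, lmWalks, List.nil_append, add_zero]
    rw [Finset.mem_biUnion]
    exact ⟨b, by simp [h.symm], Finset.mem_image_of_mem _ hK⟩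
  | node x l r ihl ihr =>
    intro a b K k B h hK
    simp only [lmE] at hK
    rw [← symmDiff_assoc] at hK
    have h1 := ihr _ _ _ _ _ h.2 hK
    have h2 := ihl _ _ _ _ _ h.1 h1
    simp only [lmInorder, BinaryTree.numNodes, List.append_assoc, List.cons_append]
    convert h2 using 2
    omega

def lmTri (u v x : V) : Finset (Sym2 V) := {s(u, v), s(u, x), s(x, v)}

lemma lmTri_mem (u v x p q : V) (huv : u ≠ v) (hux : x ≠ u) (hvx : x ≠ v) (hpq : p ≠ q) :
    s(p, q) ∈ lmTri u v x ↔ ({p, q} : Finset V) ⊆ {u, v, x} := by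
  simp only [lmTri, Finset.mem_insert, Finset.mem_singleton, Sym2.eq_iff, Finset.insert_subset_iff,
    Finset.singleton_subset_iff]
  grind

lemma lmInsert (T : BinaryTree V) (u v x : V) (huv : u ≠ v) (hux : x ≠ u) (hvx : x ≠ v) :
    ∀ a b, lmLF a T b → s(u, v) ∈ lmE a T b →
    ∃ T' : BinaryTree V, T'.numNodes = T.numNodes + 1 ∧ lmLF a T' b ∧
      lmE a T' b = symmDiff (lmE a T b) (lmTri u v x) ∧
      lmFaces a T' b = insert {u, v, x} (lmFaces a T b) := by
  induction T with
  | nil =>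
    intro a b h he
    refine ⟨.node x .nil .nil, rfl, ?_, ?_, ?_⟩
    · simp only [lmE, Finset.mem_singleton, Sym2.eq_iff] at he
      rcases he with ⟨rfl, rfl⟩ | ⟨rfl, rfl⟩
      · exact ⟨hux.symm, hvx⟩
      · exact ⟨hvx.symm, hux⟩
    · simp only [lmE, Finset.mem_singleton, Sym2.eq_iff] at he
      ext e
      induction e using Sym2.ind with
      | _ p q =>
      simp only [lmE, lmTri, Finset.mem_symmDiff, Finset.mem_singleton, Finset.mem_insert, Sym2.eq_iff]
      grind
    · simp only [lmE, Finset.mem_singleton, Sym2.eq_iff] at he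
      simp only [lmFaces]
      rcases he with ⟨rfl, rfl⟩ | ⟨rfl, rfl⟩
      · congr 1
        ext y; simp; tauto
      · congr 1
        ext y; simp; tauto
  | node y l r ihl ihr =>
    intro a b h he
    simp only [lmE, Finset.mem_symmDiff] at he
    rcases he with ⟨h1, _⟩ | ⟨h1, _⟩
    · obtain ⟨T', e1, e2, e3, e4⟩ := ihl _ _ h.1 h1
      refine ⟨.node y T' r, by simp [e1]; omega, ⟨e2, h.2⟩, ?_, ?_⟩
      · simp only [lmE, e3]
        rw [symmDiff_right_comm]
      · simp only [lmFaces, e4]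
        rw [Finset.insert_union, Finset.insert_comm]
    · obtain ⟨T', e1, e2, e3, e4⟩ := ihr _ _ h.2 h1
      refine ⟨.node y l T', by simp [e1]; omega, ⟨h.1, e2⟩, ?_, ?_⟩
      · simp only [lmE, e3]
        rw [symmDiff_assoc]
      · simp only [lmFaces, e4]
        rw [Finset.union_insert, Finset.insert_comm]

lemma lmOdd_insert (A : Finset (Finset V)) (t e : Finset V) (ht : t ∉ A) :
    Odd (((insert t A).filter (fun t => e ⊆ t)).card) ↔
      ¬ (Odd ((A.filter (fun t => e ⊆ t)).card) ↔ e ⊆ t) := by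
  rw [Finset.filter_insert]
  split_ifs with h
  · rw [Finset.card_insert_of_notMem (by simp [ht]), Nat.odd_add_one]
    simp [h]
  · simp [h]

lemma lmBuild (Z : Finset (Finset V)) (hZ : IsMinCycle Z) :
    ∃ a b : V, a ≠ b ∧ ∀ i, 1 ≤ i → i ≤ Z.card → ∃ (A : Finset (Finset V)) (T : BinaryTree V),
      A ⊆ Z ∧ A.card = i ∧ T.numNodes = i + 1 ∧ lmLF a T a ∧
      lmFaces a T a = insert {a, b} A ∧
      ∀ p q, p ≠ q → (s(p, q) ∈ lmE a T a ↔ Odd ((A.filter (fun t => {p, q} ⊆ t)).card)) := by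
  obtain ⟨⟨hZ3, hZe⟩, ⟨t0, ht0⟩, hmin⟩ := hZ
  obtain ⟨a, b, c, hab, hac, hbc, rfl⟩ := Finset.card_eq_three.mp (hZ3 t0 ht0)
  refine ⟨a, b, hab, ?_⟩
  intro i hi
  induction i, hi using Nat.le_induction with
  | base =>
    intro _
    refine ⟨{{a, b, c}}, .node b (.node c .nil .nil) .nil, by simpa using ht0, by simp, rfl,
      ⟨⟨hac, hbc.symm⟩, hab.symm⟩, ?_, ?_⟩
    · simp only [lmFaces]
      ext y
      have h1 : ({a, c, b} : Finset V) = {a, b, c} := by ext z; simp; tauto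
      have h2 : ({a, b, a} : Finset V) = {a, b} := by ext z; simp; tauto
      simp [h1, h2]
    · intro p q hpq
      have := lmOdd_insert ∅ {a, b, c} {p, q} (by simp)
      rw [insert_empty_eq] at this
      rw [this, ← lmTri_mem a b c p q hab hac.symm hbc.symm hpq]
      simp only [lmE, lmTri, Finset.mem_symmDiff, Finset.mem_singleton, Finset.mem_insert, Sym2.eq_iff]
      simp
      grind
  | succ i hi ih =>
    intro hle
    obtain ⟨A, T, hAZ, hAc, hT, hLF, hF, hE⟩ := ih (by omega)
    have hss : A ⊂ Z := by
      refine Finset.ssubset_iff_subset_ne.mpr ⟨hAZ, ?_⟩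
      rintro rfl; omega
    have hnc := hmin A hss (Finset.card_pos.mp (by omega))
    have : ∃ e : Finset V, e.card = 2 ∧ Odd ((A.filter (fun t => e ⊆ t)).card) := by
      by_contra hcon
      push Not at hcon
      exact hnc ⟨fun t ht => hZ3 t (hAZ ht), fun e he => by simpa using hcon e he⟩
    obtain ⟨e, he2, heo⟩ := this
    obtain ⟨u, v, huv, rfl⟩ := Finset.card_eq_two.mp he2
    have : ∃ t ∈ Z, t ∉ A ∧ {u, v} ⊆ t := by
      by_contra hcon
      push Not at hcon
      have heq : A.filter (fun t => {u, v} ⊆ t) = Z.filter (fun t => {u, v} ⊆ t) := by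
        ext t
        simp only [Finset.mem_filter]
        constructor
        · rintro ⟨h1, h2⟩; exact ⟨hAZ h1, h2⟩
        · rintro ⟨h1, h2⟩
          refine ⟨?_, h2⟩
          by_contra h3
          exact hcon t h1 h3 h2
      rw [heq] at heo
      exact (Nat.not_odd_iff_even.mpr (hZe _ he2)) heo
    obtain ⟨t, htZ, htA, hut⟩ := this
    have : ∃ x, x ≠ u ∧ x ≠ v ∧ t = {u, v, x} := by
      have h3 := hZ3 t htZ
      have h4 : (t \ {u, v}).card = 1 := by
        rw [Finset.card_sdiff_of_subset hut, h3, he2]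
      obtain ⟨x, hx⟩ := Finset.card_eq_one.mp h4
      have hx' : x ∈ t \ {u, v} := by rw [hx]; simp
      simp at hx'
      refine ⟨x, hx'.2.1, hx'.2.2, ?_⟩
      rw [← Finset.union_sdiff_of_subset hut, hx]
      ext z; simp
    obtain ⟨x, hxu, hxv, rfl⟩ := this
    obtain ⟨T', e1, e2, e3, e4⟩ := lmInsert T u v x huv hxu hxv a a hLF ((hE u v huv).mpr heo)
    refine ⟨insert {u, v, x} A, T', Finset.insert_subset htZ hAZ, ?_, by omega, e2, ?_, ?_⟩
    · rw [Finset.card_insert_of_notMem htA, hAc]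
    · rw [e4, hF, Finset.insert_comm]
    · intro p q hpq
      rw [lmOdd_insert _ _ _ htA, ← hE p q hpq, ← lmTri_mem u v x p q huv hxu hxv hpq, e3,
        Finset.mem_symmDiff]
      tauto

lemma lmEncode (Z : Finset (Finset V)) (hZ : IsMinCycle Z) :
    ∃ (a : V) (T : BinaryTree V), T.numNodes = Z.card + 1 ∧ lmLF a T a ∧ lmE a T a = ∅ ∧
      (lmFaces a T a).filter (fun t => t.card = 3) = Z := by
  obtain ⟨a, b, hab, h⟩ := lmBuild Z hZ
  obtain ⟨A, T, hAZ, hAc, hT, hLF, hF, hE⟩ := h Z.card (Finset.card_pos.mpr hZ.2.1) le_rfl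
  obtain rfl := Finset.eq_of_subset_of_card_le hAZ hAc.ge
  refine ⟨a, T, hT, hLF, ?_, ?_⟩
  · rw [Finset.eq_empty_iff_forall_notMem]
    intro e
    induction e using Sym2.ind with
    | _ p q =>
    by_cases hpq : p = q
    · subst hpq; exact lmE_not_diag T a a hLF p
    · rw [hE p q hpq, Nat.not_odd_iff_even]
      exact hZ.1.2 _ (Finset.card_pair hpq)
  · rw [hF, Finset.filter_insert, Finset.card_pair hab, if_neg (by norm_num)]
    exact Finset.filter_true_of_mem hZ.1.1

lemma lmNumNodes_map (T : BinaryTree V) : (T.map (fun _ => ())).numNodes = T.numNodes := by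
  induction T with
  | nil => rfl
  | node x l r ihl ihr => simp [BinaryTree.map, ihl, ihr]

lemma lmCatalan_le (n : ℕ) : catalan n ≤ 4 ^ n := by
  rw [catalan_eq_centralBinom_div]
  refine (Nat.div_le_self _ _).trans ?_
  rw [Nat.centralBinom_eq_two_mul_choose]
  refine (Nat.choose_le_two_pow _ _).trans ?_
  rw [pow_mul]; norm_num

open Classical in
lemma lmCount [Fintype V] (f : ℕ) :
    (((Finset.univ : Finset (Finset (Finset V))).filter (fun Z => IsMinCycle Z ∧ Z.card = f)).card : ℝ) ≤
      Fintype.card V * (4 ^ (f + 1) * (3 * Real.sqrt (Fintype.card V + (f + 2 : ℕ))) ^ (f + 2)) := by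
  set t : Finset (Σ _ : V, BinaryTree Unit × List V) := (Finset.univ : Finset V).sigma
    (fun a => BinaryTree.treesOfNumNodesEq (f + 1) ×ˢ lmWalks a (f + 2) a ∅) with ht
  have h1 : ((Finset.univ : Finset (Finset (Finset V))).filter (fun Z => IsMinCycle Z ∧ Z.card = f)).card
      ≤ t.card := by
    apply Finset.card_le_card_of_forall_subsingleton (fun Z y => ∃ T : BinaryTree V,
      (lmFaces y.1 T y.1).filter (fun t => t.card = 3) = Z ∧ T.map (fun _ => ()) = y.2.1 ∧
        lmInorder T ++ [y.1] = y.2.2)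
    · intro Z hZ
      simp only [Finset.mem_filter, Finset.mem_univ, true_and] at hZ
      obtain ⟨hZ, rfl⟩ := hZ
      obtain ⟨a, T, e1, e2, e3, e4⟩ := lmEncode Z hZ
      refine ⟨⟨a, (T.map (fun _ => ()), lmInorder T ++ [a])⟩, ?_, T, e4, rfl, rfl⟩
      simp only [ht, Finset.mem_sigma, Finset.mem_univ, true_and, Finset.mem_product]
      refine ⟨?_, ?_⟩
      · rw [BinaryTree.mem_treesOfNumNodesEq, lmNumNodes_map, e1]
      · have := lmWalks_mem a T a a [] 0 ∅ e2 (by simp [e3, lmWalks])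
        convert this using 2
        omega
    · rintro ⟨a, t, L⟩ _ Z hZ Z' hZ'
      obtain ⟨_, T, e1, e2, e3⟩ := hZ
      obtain ⟨_, T', e1', e2', e3'⟩ := hZ'
      obtain ⟨rfl, _⟩ := lmInorder_inj T T' _ _ (e2.trans e2'.symm) (e3.trans e3'.symm)
      rw [← e1, ← e1']
  refine (Nat.cast_le.mpr h1).trans ?_
  rw [ht, Finset.card_sigma]
  push_cast
  rw [← nsmul_eq_mul, ← Finset.card_univ]
  refine Finset.sum_le_card_nsmul _ _ _ ?_
  intro a _
  rw [Finset.card_product, BinaryTree.treesOfNumNodesEq_card_eq_catalan]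
  push_cast
  refine mul_le_mul ?_ ?_ (by positivity) (by positivity)
  · exact_mod_cast lmCatalan_le (f + 1)
  · have := lmWalks_closed_card_le a (f + 2)
    simpa using this
end Trees

section Prob

noncomputable def lmWt (n : ℕ) (p : ℝ≥0∞) (ω : Tri n → Bool) : ℝ≥0∞ :=
  ∏ t : Tri n, (if ω t then p else 1 - p)

open Classical in
lemma lmProb_eq (n : ℕ) (p : ℝ≥0∞) (E : Set (Tri n → Bool)) :
    lmProb n p E = ∑ ω : Tri n → Bool, if ω ∈ E then lmWt n p ω else 0 := by
  unfold lmProb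
  have := tsum_subtype E (lmWt n p)
  unfold lmWt at this
  rw [this, tsum_fintype]
  rfl

lemma lmWt_sum (n : ℕ) (p : ℝ≥0∞) (hp : p ≤ 1) : ∑ ω : Tri n → Bool, lmWt n p ω = 1 := by
  unfold lmWt
  have := Fintype.prod_sum (fun (_ : Tri n) (b : Bool) => if b then p else 1 - p)
  rw [← this]
  simp [add_tsub_cancel_of_le hp]

open Classical in
lemma lmWt_contain (n : ℕ) (p : ℝ≥0∞) (hp : p ≤ 1) (Z : Finset (Tri n)) :
    ∑ ω : Tri n → Bool, (if ∀ t ∈ Z, ω t = true then lmWt n p ω else 0) = p ^ Z.card := by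
  have h1 : ∀ ω : Tri n → Bool, (if ∀ t ∈ Z, ω t = true then lmWt n p ω else 0) =
      ∏ t : Tri n, (if ω t then p else if t ∈ Z then 0 else 1 - p) := by
    intro ω
    split_ifs with h
    · unfold lmWt
      refine Finset.prod_congr rfl (fun t _ => ?_)
      by_cases ht : t ∈ Z
      · simp [h t ht]
      · simp [ht]
    · push Not at h
      obtain ⟨t, ht, hω⟩ := h
      symm
      apply Finset.prod_eq_zero (Finset.mem_univ t)
      simp at hω
      simp [hω, ht]
  simp_rw [h1]
  have := Fintype.prod_sum (fun (t : Tri n) (b : Bool) => if b then p else if t ∈ Z then 0 else 1 - p)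
  rw [← this]
  have h2 : ∀ t : Tri n, (∑ b : Bool, (if b then p else if t ∈ Z then 0 else 1 - p)) = if t ∈ Z then p else 1 := by
    intro t
    by_cases ht : t ∈ Z
    · simp [ht]
    · simp [ht, add_tsub_cancel_of_le hp]
  simp_rw [h2]
  rw [Finset.prod_ite_mem]
  simp

lemma lmProb_compl (n : ℕ) (p : ℝ≥0∞) (hp : p ≤ 1) (E : Set (Tri n → Bool)) :
    lmProb n p E + lmProb n p Eᶜ = 1 := by
  classical
  rw [lmProb_eq, lmProb_eq, ← Finset.sum_add_distrib, ← lmWt_sum n p hp]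
  refine Finset.sum_congr rfl (fun ω _ => ?_)
  by_cases h : ω ∈ E <;> simp [h]

open Classical in
lemma lmProb_union (n : ℕ) (p : ℝ≥0∞) (hp : p ≤ 1) (S : Finset (Finset (Finset (Fin n))))
    (hS : ∀ Z ∈ S, ∀ t ∈ Z, t.card = 3) :
    lmProb n p {ω | ∃ Z ∈ S, ∀ t ∈ Z, ∃ h : t.card = 3, ω ⟨t, h⟩ = true} ≤ ∑ Z ∈ S, p ^ Z.card := by
  rw [lmProb_eq]
  have h1 : ∀ Z ∈ S, p ^ Z.card = ∑ ω : Tri n → Bool,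
      (if ∀ t ∈ Z.subtype (fun t : Finset (Fin n) => t.card = 3), ω t = true then lmWt n p ω else 0) := by
    intro Z hZ
    rw [lmWt_contain n p hp, Finset.card_subtype, Finset.filter_true_of_mem (hS Z hZ)]
  rw [Finset.sum_congr rfl h1, Finset.sum_comm]
  refine Finset.sum_le_sum (fun ω _ => ?_)
  split_ifs with h
  · obtain ⟨Z, hZ, hω⟩ := h
    refine le_trans ?_ (Finset.single_le_sum (fun _ _ => zero_le) hZ)
    rw [if_pos]
    rintro ⟨t, ht⟩ htZ
    rw [Finset.mem_subtype] at htZ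
    exact (hω t htZ).2
  · exact zero_le

/-- upper bound for the failure probability -/
noncomputable def lmTerm (n : ℕ) (p : ℝ) (f : ℕ) : ℝ :=
  n * (4 ^ (f + 1) * (3 * Real.sqrt (n + (f + 2 : ℕ))) ^ (f + 2)) * p ^ f

lemma lmProb_bad (n : ℕ) (p : ℝ) (hp0 : 0 ≤ p) (hp : p ≤ 1) (k F : ℕ) :
    lmProb n (ENNReal.ofReal p) {ω | ∃ Z : Finset (Finset (Fin n)),
          (∀ t ∈ Z, ∃ h : t.card = 3, ω ⟨t, h⟩ = true) ∧
          IsMinCycle Z ∧ k ≤ Z.card ∧ Z.card ≤ F} ≤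
      ENNReal.ofReal (∑ f ∈ Finset.Icc k F, lmTerm n p f) := by
  classical
  set S : Finset (Finset (Finset (Fin n))) := Finset.univ.filter
    (fun Z => IsMinCycle Z ∧ Z.card ∈ Finset.Icc k F) with hS
  have h1 := lmProb_union n (ENNReal.ofReal p) (by simpa using hp) S (by
    intro Z hZ
    simp only [hS, Finset.mem_filter] at hZ
    exact hZ.2.1.1.1)
  have h2 : {ω : Tri n → Bool | ∃ Z : Finset (Finset (Fin n)),
          (∀ t ∈ Z, ∃ h : t.card = 3, ω ⟨t, h⟩ = true) ∧
          IsMinCycle Z ∧ k ≤ Z.card ∧ Z.card ≤ F} =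
      {ω | ∃ Z ∈ S, ∀ t ∈ Z, ∃ h : t.card = 3, ω ⟨t, h⟩ = true} := by
    ext ω
    simp only [hS, Set.mem_ofPred_eq, Finset.mem_filter, Finset.mem_univ, true_and, Finset.mem_Icc]
    constructor
    · rintro ⟨Z, a, b⟩; exact ⟨Z, b, a⟩
    · rintro ⟨Z, a, b⟩; exact ⟨Z, b, a⟩
  rw [h2]
  refine h1.trans ?_
  simp_rw [← ENNReal.ofReal_pow hp0]
  rw [← ENNReal.ofReal_sum_of_nonneg (fun _ _ => by positivity)]
  apply ENNReal.ofReal_le_ofReal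
  rw [← Finset.sum_fiberwise_of_maps_to (s := S) (t := Finset.Icc k F) (g := Finset.card)
    (fun Z hZ => (Finset.mem_filter.mp hZ).2.2)]
  refine Finset.sum_le_sum (fun f _ => ?_)
  have h3 : ∑ Z ∈ S.filter (fun Z => Z.card = f), p ^ Z.card = (S.filter (fun Z => Z.card = f)).card * p ^ f := by
    rw [← nsmul_eq_mul]
    refine Finset.sum_eq_card_nsmul (fun Z hZ => ?_)
    rw [(Finset.mem_filter.mp hZ).2]
  rw [h3]
  unfold lmTerm
  refine mul_le_mul_of_nonneg_right ?_ (by positivity)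
  have h4 := lmCount (V := Fin n) f
  rw [Fintype.card_fin] at h4
  refine le_trans (Nat.cast_le.mpr (Finset.card_le_card ?_)) h4
  intro Z
  simp only [hS, Finset.mem_filter, Finset.mem_univ, true_and]
  tauto

end Prob

section Asymp

lemma lmTerm_le (n f : ℕ) (p X : ℝ) (hp0 : 0 ≤ p) (hX : 0 ≤ X)
    (h : (n : ℝ) + (f + 2 : ℕ) ≤ 4 * X ^ 2) :
    lmTerm n p f ≤ 144 * n * X ^ 2 * (24 * (X * p)) ^ f := by
  unfold lmTerm
  have hs : Real.sqrt (n + (f + 2 : ℕ)) ≤ 2 * X := by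
    rw [Real.sqrt_le_left (by positivity)]
    linarith [h, mul_pow 2 X 2]
  calc _ ≤ n * (4 ^ (f + 1) * (3 * (2 * X)) ^ (f + 2)) * p ^ f := by gcongr
    _ = _ := by
      rw [mul_pow 24, mul_pow X p, show (3 * (2 * X)) = 6 * X by ring, mul_pow 6 X, pow_add X, pow_add (6:ℝ),
        show (24:ℝ) = 4 * 6 by norm_num, mul_pow (4:ℝ), pow_succ (4:ℝ)]
      ring

lemma lmSum_le (α ε : ℝ) (hα0 : 0 < α) (hα : α < 1 / 2) (hε : 0 < ε) (hαε : 2 * α + ε < 1)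
    (k : ℕ) (hk : 8 ≤ (1 / 2 - α) * k) (n : ℕ) (hn : 2 ≤ n)
    (h1 : 24 * (n : ℝ) ^ (-(1 / 2 - α)) ≤ 1) (h2 : 24 * (n : ℝ) ^ (-(ε / 2)) ≤ 1 / 2) :
    ∑ f ∈ Finset.Icc k ⌊(n : ℝ) ^ (2 - 2 * α - ε)⌋₊, lmTerm n ((n : ℝ) ^ (α - 1)) f ≤
      288 * (24 ^ k * ((n : ℝ) ^ 3)⁻¹ + (n : ℝ) ^ 5 * (1 / 2) ^ n) := by
  set β := 2 - 2 * α - ε with hβ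
  have hn0 : (0 : ℝ) < n := by positivity
  have hn1 : (1 : ℝ) ≤ n := by exact_mod_cast (by omega : 1 ≤ n)
  have hn2 : (2 : ℝ) ≤ n := by exact_mod_cast hn
  have hnβ : (n : ℝ) ≤ (n : ℝ) ^ β := by
    conv_lhs => rw [← Real.rpow_one (n : ℝ)]
    exact Real.rpow_le_rpow_of_exponent_le hn1 (by linarith)
  have hβ2 : (n : ℝ) ^ β ≤ (n : ℝ) ^ 2 := by
    rw [← Real.rpow_natCast]
    exact Real.rpow_le_rpow_of_exponent_le hn1 (by push_cast; linarith)
  set b : ℝ := 144 * n ^ 3 * (24 ^ k * ((n : ℝ) ^ 8)⁻¹ + (1 / 2) ^ n) with hb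
  have hterm : ∀ f ∈ Finset.Icc k ⌊(n : ℝ) ^ β⌋₊, lmTerm n ((n : ℝ) ^ (α - 1)) f ≤ b := by
    intro f hf
    rw [Finset.mem_Icc, Nat.le_floor_iff (by positivity)] at hf
    by_cases hfn : f ≤ n
    · have hfn' : (f : ℝ) ≤ n := by exact_mod_cast hfn
      have hX2 : ((n : ℝ) ^ (1 / 2 : ℝ)) ^ 2 = n := by
        rw [← Real.rpow_natCast, ← Real.rpow_mul hn0.le]; norm_num
      have hXp : (n : ℝ) ^ (1 / 2 : ℝ) * (n : ℝ) ^ (α - 1) = (n : ℝ) ^ (-(1 / 2 - α)) := by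
        rw [← Real.rpow_add hn0]; congr 1; ring
      refine (lmTerm_le n f _ ((n : ℝ) ^ (1 / 2 : ℝ)) (by positivity) (by positivity) ?_).trans ?_
      · rw [hX2]; push_cast; linarith
      · rw [hX2, hXp]
        have h3 : (24 * (n : ℝ) ^ (-(1 / 2 - α))) ^ f ≤ 24 ^ k * ((n : ℝ) ^ 8)⁻¹ := by
          refine (pow_le_pow_of_le_one (by positivity) h1 hf.1).trans ?_
          rw [mul_pow]
          refine mul_le_mul_of_nonneg_left ?_ (by positivity)
          rw [← Real.rpow_natCast, ← Real.rpow_natCast, ← Real.rpow_mul hn0.le, ← Real.rpow_neg hn0.le]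
          refine Real.rpow_le_rpow_of_exponent_le hn1 ?_
          push_cast
          linarith
        rw [hb]
        refine mul_le_mul ?_ (h3.trans (le_add_of_nonneg_right (by positivity))) (by positivity) (by positivity)
        nlinarith [mul_nonneg hn0.le hn0.le, mul_nonneg (mul_nonneg hn0.le hn0.le) (sub_nonneg.mpr hn1)]
    · have hX2 : ((n : ℝ) ^ (β / 2)) ^ 2 = (n : ℝ) ^ β := by
        rw [← Real.rpow_natCast, ← Real.rpow_mul hn0.le]; congr 1; push_cast; ring
      have hXp : (n : ℝ) ^ (β / 2) * (n : ℝ) ^ (α - 1) = (n : ℝ) ^ (-(ε / 2)) := by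
        rw [← Real.rpow_add hn0]; congr 1; rw [hβ]; ring
      refine (lmTerm_le n f _ ((n : ℝ) ^ (β / 2)) (by positivity) (by positivity) ?_).trans ?_
      · rw [hX2]; push_cast; linarith [hf.2]
      · rw [hX2, hXp]
        have h3 : (24 * (n : ℝ) ^ (-(ε / 2))) ^ f ≤ (1 / 2) ^ n := by
          refine (pow_le_pow_left₀ (by positivity) h2 f).trans ?_
          exact pow_le_pow_of_le_one (by norm_num) (by norm_num) (by omega)
        rw [hb]
        refine mul_le_mul ?_ (h3.trans (le_add_of_nonneg_left (by positivity))) (by positivity) (by positivity)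
        calc 144 * (n : ℝ) * n ^ β ≤ 144 * n * n ^ 2 := by gcongr
          _ = _ := by ring
  refine (Finset.sum_le_card_nsmul _ _ _ hterm).trans ?_
  rw [nsmul_eq_mul, Nat.card_Icc]
  have hc : ((⌊(n : ℝ) ^ β⌋₊ + 1 - k : ℕ) : ℝ) ≤ 2 * n ^ 2 := by
    calc ((⌊(n : ℝ) ^ β⌋₊ + 1 - k : ℕ) : ℝ) ≤ ((⌊(n : ℝ) ^ β⌋₊ + 1 : ℕ) : ℝ) := by
          exact_mod_cast Nat.sub_le _ _
      _ ≤ n ^ β + 1 := by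
          push_cast
          linarith [Nat.floor_le (show 0 ≤ (n : ℝ) ^ β by positivity)]
      _ ≤ _ := by nlinarith
  refine (mul_le_mul_of_nonneg_right hc (by positivity)).trans (le_of_eq ?_)
  rw [hb]
  field_simp
  ring

lemma lmLim (C c : ℝ) (d : ℝ) (hd : 0 < d) (hc : 0 < c) :
    ∀ᶠ n : ℕ in Filter.atTop, C * (n : ℝ) ^ (-d) ≤ c := by
  have h := ((tendsto_rpow_neg_atTop hd).comp tendsto_natCast_atTop_atTop).const_mul C
  rw [mul_zero] at h
  exact (h.eventually_le_const hc)

end Asymp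

/-- **Lemma (no intermediate or large cycles).**
Let `0 < α < 1/2`, `ε > 0` with `2α + ε < 1`, `M = ⌈8/(1-2α)⌉ + 1`, and `p = n^(α-1)`.
Then with high probability `Y ∼ Y(n,p)` contains no inclusion-minimal `Z/2` 2-cycle
whose number of faces `f` satisfies `2M - 2 ≤ f ≤ n^(2-2α-ε)`. -/
theorem no_intermediate_or_large_cycles_whp (α ε : ℝ)
    (hα0 : 0 < α) (hα : α < 1 / 2) (hε : 0 < ε) (hαε : 2 * α + ε < 1) :
    Filter.Tendsto (fun n : ℕ =>
      lmProb n ((n : ℝ≥0∞) ^ (α - 1))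
        {ω | ¬ ∃ Z : Finset (Finset (Fin n)),
          (∀ t ∈ Z, ∃ h : t.card = 3, ω ⟨t, h⟩ = true) ∧
          IsMinCycle Z ∧
          2 * (⌈(8 : ℝ) / (1 - 2 * α)⌉₊ + 1) - 2 ≤ Z.card ∧
          (Z.card : ℝ) ≤ (n : ℝ) ^ (2 - 2 * α - ε)})
      Filter.atTop (nhds 1) := by
  set k : ℕ := 2 * (⌈(8 : ℝ) / (1 - 2 * α)⌉₊ + 1) - 2 with hkdef
  have hk : (8 : ℝ) ≤ (1 / 2 - α) * k := by
    have hk2 : k = 2 * ⌈(8 : ℝ) / (1 - 2 * α)⌉₊ := by omega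
    rw [hk2]
    have h1 := Nat.le_ceil ((8 : ℝ) / (1 - 2 * α))
    rw [div_le_iff₀ (by linarith)] at h1
    push_cast
    linarith
  have hδ : Filter.Tendsto (fun n : ℕ => (1 : ℝ≥0∞) -
      ENNReal.ofReal (288 * (24 ^ k * ((n : ℝ) ^ 3)⁻¹ + (n : ℝ) ^ 5 * (1 / 2) ^ n)))
      Filter.atTop (nhds 1) := by
    have h1 : Filter.Tendsto (fun n : ℕ => (n : ℝ) ^ 5 * (1 / 2 : ℝ) ^ n) Filter.atTop (nhds 0) :=
      tendsto_pow_const_mul_const_pow_of_abs_lt_one 5 (by norm_num [abs_of_pos])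
    have h2 : Filter.Tendsto (fun n : ℕ => ((n : ℝ) ^ 3)⁻¹) Filter.atTop (nhds 0) :=
      Filter.Tendsto.inv_tendsto_atTop
        ((Filter.tendsto_pow_atTop (by norm_num)).comp tendsto_natCast_atTop_atTop)
    have h3 := ((h2.const_mul (24 ^ k)).add h1).const_mul 288
    simp only [mul_zero, add_zero] at h3
    have h4 := ENNReal.tendsto_ofReal h3
    have h5 := ENNReal.Tendsto.sub (tendsto_const_nhds (x := (1 : ℝ≥0∞))) h4 (Or.inl ENNReal.one_ne_top)
    simpa using h5
  have hp : ∀ n : ℕ, 2 ≤ n → (n : ℝ≥0∞) ^ (α - 1) = ENNReal.ofReal ((n : ℝ) ^ (α - 1)) := by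
    intro n hn
    rw [← ENNReal.ofReal_rpow_of_pos (by positivity), ENNReal.ofReal_natCast]
  have hp1 : ∀ n : ℕ, 2 ≤ n → (n : ℝ) ^ (α - 1) ≤ 1 := by
    intro n hn
    exact Real.rpow_le_one_of_one_le_of_nonpos (by exact_mod_cast (by omega : 1 ≤ n)) (by linarith)
  refine tendsto_of_tendsto_of_tendsto_of_le_of_le' hδ tendsto_const_nhds ?_ ?_
  · filter_upwards [Filter.eventually_ge_atTop 2, lmLim 24 1 (1 / 2 - α) (by linarith) one_pos,
      lmLim 24 (1 / 2) (ε / 2) (by linarith) (by norm_num)] with n hn h1 h2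
    rw [hp n hn, tsub_le_iff_right]
    have hb := lmProb_bad n ((n : ℝ) ^ (α - 1)) (by positivity) (hp1 n hn) k
      ⌊(n : ℝ) ^ (2 - 2 * α - ε)⌋₊
    have hs := ENNReal.ofReal_le_ofReal (lmSum_le α ε hα0 hα hε hαε k hk n hn h1 h2)
    rw [← lmProb_compl n (ENNReal.ofReal ((n : ℝ) ^ (α - 1))) (by simpa using hp1 n hn)
      {ω | ¬ ∃ Z : Finset (Finset (Fin n)),
          (∀ t ∈ Z, ∃ h : t.card = 3, ω ⟨t, h⟩ = true) ∧
          IsMinCycle Z ∧ k ≤ Z.card ∧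
          (Z.card : ℝ) ≤ (n : ℝ) ^ (2 - 2 * α - ε)}]
    gcongr
    refine le_trans (le_of_eq ?_) (hb.trans hs)
    congr 1
    ext ω
    simp only [Set.mem_compl_iff, Set.mem_ofPred_eq, not_not,
      Nat.le_floor_iff (show 0 ≤ (n : ℝ) ^ (2 - 2 * α - ε) by positivity)]
  · filter_upwards [Filter.eventually_ge_atTop 2] with n hn
    rw [hp n hn, ← lmProb_compl n (ENNReal.ofReal ((n : ℝ) ^ (α - 1))) (by simpa using hp1 n hn) _]
    exact le_self_add
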